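/- Let R be a commutative Noetherian local ring, let M be a finitely generated R-module, and suppose there is a short exact sequence of finitely generated R-modules 0 → M^{⊕a} → K → Ω^n M^{⊕b} → 0, where a ≥ 1, b ≥ 1, and n ≥ 0 are integers. If K has finite Gorenstein dimension, then for each integer i ≥ 1 there exists a short exact sequence of finitely generated R-modules 0 → M^{⊕a_i} → Y_i → Ω^{r_i} M^{⊕b_i} → 0, where Y_i has finite Gorenstein dimension, r_i = 2^i(n+1) − 1, a_i = a^{2^i}, and b_i = b^{2^i}. -/

import Mathlib

open CategoryTheory Pointwise

universe u

variable (R : Type u) [CommRing R]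

/-- `Ext^n_R(X, Y) = 0`. -/
def ExtVanish (X Y : Type u) [AddCommGroup X] [Module R X]
    [AddCommGroup Y] [Module R Y] (n : ℕ) : Prop :=
  Subsingleton (((Ext R (ModuleCat.{u} R) n).obj
    (Opposite.op (ModuleCat.of R X))).obj (ModuleCat.of R Y))

/-- A finitely generated module `X` is totally reflexive if the evaluation map to the
double dual is bijective and `Ext^i(X, R) = 0 = Ext^i(X^*, R)` for all `i ≥ 1`. -/
def IsTotallyReflexive (X : Type u) [AddCommGroup X] [Module R X] : Prop :=
  Module.Finite R X ∧
  Function.Bijective (Module.Dual.eval R X) ∧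
  (∀ i : ℕ, 1 ≤ i → ExtVanish R X R i) ∧
  (∀ i : ℕ, 1 ≤ i → ExtVanish R (Module.Dual R X) R i)

/-- `0 → A → B → C → 0` is a short exact sequence. -/
def IsShortExact {A B C : Type u} [AddCommGroup A] [Module R A] [AddCommGroup B] [Module R B]
    [AddCommGroup C] [Module R C] (f : A →ₗ[R] B) (g : B →ₗ[R] C) : Prop :=
  Function.Injective f ∧ Function.Surjective g ∧ Function.Exact f g

/-- Gorenstein dimension at most `n`: there is a resolution of length `≤ n`
by totally reflexive modules. -/
def GdimLE : ℕ → ModuleCat.{u} R → Prop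
  | 0, M => IsTotallyReflexive R M
  | n + 1, M => ∃ (X K : ModuleCat.{u} R) (f : K →ₗ[R] X) (g : X →ₗ[R] M),
      IsTotallyReflexive R X ∧ IsShortExact R f g ∧ GdimLE n K

/-- Projective dimension at most `n`. -/
def PdimLE : ℕ → ModuleCat.{u} R → Prop
  | 0, M => Module.Finite R M ∧ Module.Projective R M
  | n + 1, M => ∃ (X K : ModuleCat.{u} R) (f : K →ₗ[R] X) (g : X →ₗ[R] M),
      Module.Finite R X ∧ Module.Projective R X ∧ IsShortExact R f g ∧ PdimLE n K

/-- Injective dimension at most `n`. -/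
def InjdimLE : ℕ → ModuleCat.{u} R → Prop
  | 0, M => Module.Injective R M
  | n + 1, M => ∃ (I C : ModuleCat.{u} R) (f : M →ₗ[R] I) (g : I →ₗ[R] C),
      Module.Injective R I ∧ IsShortExact R f g ∧ InjdimLE n C

/-- The Gorenstein dimension, as an element of `ℕ∞`. -/
noncomputable def Gdim (M : ModuleCat.{u} R) : ℕ∞ :=
  sInf {n : ℕ∞ | ∃ m : ℕ, n = (m : ℕ∞) ∧ GdimLE R m M}

/-- The projective dimension, as an element of `ℕ∞`. -/
noncomputable def Pdim (M : ModuleCat.{u} R) : ℕ∞ :=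
  sInf {n : ℕ∞ | ∃ m : ℕ, n = (m : ℕ∞) ∧ PdimLE R m M}

/-- A local ring is Gorenstein if it has finite injective dimension over itself. -/
def IsGorensteinRing : Prop :=
  ∃ n : ℕ, InjdimLE R n (ModuleCat.of R R)

/-- `IsSyzygy R n S K` : `S` is an `n`-th syzygy of `K`, i.e. there is an exact sequence
`0 → S → F_{n-1} → ⋯ → F_0 → K → 0` with each `F_j` finitely generated free. -/
def IsSyzygy : ℕ → ModuleCat.{u} R → ModuleCat.{u} R → Prop
  | 0, S, K => Nonempty (S ≃ₗ[R] K)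
  | n + 1, S, K => ∃ (W F : ModuleCat.{u} R) (f : W →ₗ[R] F) (g : F →ₗ[R] K),
      Module.Free R F ∧ Module.Finite R F ∧ IsShortExact R f g ∧ IsSyzygy n S W

/-- One step in a reducing sequence: a short exact sequence
`0 → K^{⊕a} → L → (Ω^n K)^{⊕b} → 0`. -/
def ReducingStep (K L : ModuleCat.{u} R) (a b n : ℕ) : Prop :=
  ∃ (W : ModuleCat.{u} R) (f : (Fin a → K) →ₗ[R] L) (g : L →ₗ[R] (Fin b → W)),
    IsSyzygy R n W K ∧ IsShortExact R f g

/-- `M` admits a reducing sequence `K_0 = M, K_1, …, K_r` relative to the property `P`,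
that is, short exact sequences `0 → K_{i-1}^{⊕a_i} → K_i → (Ω^{n_i}K_{i-1})^{⊕b_i} → 0`
with `a_i, b_i, n_i ≥ 1` and `P (K_r)`. -/
def HasReducingSeq (P : ModuleCat.{u} R → Prop) (M : ModuleCat.{u} R) (r : ℕ) : Prop :=
  ∃ (K : Fin (r + 1) → ModuleCat.{u} R) (a b n : Fin r → ℕ),
    K 0 = M ∧ (∀ i, Module.Finite R (K i)) ∧
    (∀ i : Fin r, 1 ≤ a i ∧ 1 ≤ b i ∧ 1 ≤ n i ∧
      ReducingStep R (K i.castSucc) (K i.succ) (a i) (b i) (n i)) ∧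
    P (K (Fin.last r))

/-- The reducing invariant attached to the finiteness property `P`. -/
noncomputable def ReducingDim (P : ModuleCat.{u} R → Prop) (M : ModuleCat.{u} R) : ℕ∞ :=
  sInf {n : ℕ∞ | ∃ r : ℕ, n = (r : ℕ∞) ∧ HasReducingSeq R P M r}

/-- The reducing Gorenstein dimension. -/
noncomputable def rGdim (M : ModuleCat.{u} R) : ℕ∞ :=
  ReducingDim R (fun N => ∃ m : ℕ, GdimLE R m N) M

/-- The reducing projective dimension. -/
noncomputable def rPdim (M : ModuleCat.{u} R) : ℕ∞ :=
  ReducingDim R (fun N => ∃ m : ℕ, PdimLE R m N) M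

/-- depth of a module over a local ring: `inf { i | Ext^i(k, M) ≠ 0 }`. -/
noncomputable def depth [IsLocalRing R] (M : ModuleCat.{u} R) : ℕ∞ :=
  sInf {n : ℕ∞ | ∃ i : ℕ, n = (i : ℕ∞) ∧
    ¬ ExtVanish R (R ⧸ IsLocalRing.maximalIdeal R) M i}

/-- maximal Cohen-Macaulay: depth equals the Krull dimension of the ring. -/
def IsMCM [IsLocalRing R] (M : ModuleCat.{u} R) : Prop :=
  (depth R M : WithBot ℕ∞) = ringKrullDim R

/-- torsion-free: every non zero-divisor of `R` is a non zero-divisor on `M`. -/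
def IsTorsionFreeModule (M : Type u) [AddCommGroup M] [Module R M] : Prop :=
  ∀ r ∈ nonZeroDivisors R, ∀ m : M, r • m = 0 → m = 0



theorem extVanish_iff (X Y : Type u) [AddCommGroup X] [Module R X]
    [AddCommGroup Y] [Module R Y] (n : ℕ) :
    ExtVanish R X Y (n + 1) ↔
      Subsingleton (Abelian.Ext (ModuleCat.of R X) (ModuleCat.of R Y) (n + 1)) := by
  have P : ProjectiveResolution (ModuleCat.of R X) := projectiveResolution _
  have h1 : ExtVanish R X Y (n + 1) ↔
      ∀ f : P.complex.X (n + 1) ⟶ ModuleCat.of R Y, P.complex.d (n + 2) (n + 1) ≫ f = 0 →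
        ∃ g : P.complex.X n ⟶ ModuleCat.of R Y, P.complex.d (n + 1) n ≫ g = f := by
    unfold ExtVanish
    rw [← ModuleCat.isZero_iff_subsingleton, (P.isoExt (n + 1) (ModuleCat.of R Y)).isZero_iff,
      ← HomologicalComplex.exactAt_iff_isZero_homology,
      HomologicalComplex.exactAt_iff' _ n (n + 1) (n + 2) (by simp) (by simp),
      ShortComplex.moduleCat_exact_iff]
    rfl
  rw [h1]
  constructor
  · intro h
    refine subsingleton_of_forall_eq 0 fun α => ?_
    obtain ⟨f, hf, rfl⟩ := P.extMk_surjective α (n + 2) rfl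
    exact (P.extMk_eq_zero_iff f (n + 2) rfl hf n rfl).2 (h f hf)
  · intro h f hf
    exact (P.extMk_eq_zero_iff f (n + 2) rfl hf n rfl).1 (Subsingleton.elim _ _)


section ses
variable {R}
variable {A B C : Type u} [AddCommGroup A] [Module R A] [AddCommGroup B] [Module R B]
    [AddCommGroup C] [Module R C] {f : A →ₗ[R] B} {g : B →ₗ[R] C}

theorem ses_zero (h : IsShortExact R f g) (x : A) : g (f x) = 0 := (h.2.2 _).2 ⟨x, rfl⟩

theorem ses_lift (h : IsShortExact R f g) (y : B) (hy : g y = 0) : ∃ x, f x = y := (h.2.2 _).1 hy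

/-- the short complex in the category of modules -/
abbrev sesComplex (h : IsShortExact R f g) : ShortComplex (ModuleCat.{u} R) :=
  ModuleCat.shortComplexOfCompEqZero f g (by ext x; exact ses_zero h x)

theorem sesComplex_exact (h : IsShortExact R f g) : (sesComplex h).ShortExact where
  exact := (ShortComplex.ShortExact.moduleCat_exact_iff_function_exact _).mpr h.2.2
  mono_f := (ModuleCat.mono_iff_injective _).mpr h.1
  epi_g := (ModuleCat.epi_iff_surjective _).mpr h.2.1

theorem ext_mid (h : IsShortExact R f g) (i : ℕ) (hA : ExtVanish R A R (i + 1))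
    (hC : ExtVanish R C R (i + 1)) : ExtVanish R B R (i + 1) := by
  rw [extVanish_iff] at *
  refine subsingleton_of_forall_eq 0 fun x => ?_
  obtain ⟨y, rfl⟩ := Abelian.Ext.contravariant_sequence_exact₂ (sesComplex_exact h) _ x
    (Subsingleton.elim (α := Abelian.Ext (ModuleCat.of R A) (ModuleCat.of R R) (i + 1)) _ _)
  rw [Subsingleton.elim (α := Abelian.Ext (ModuleCat.of R C) (ModuleCat.of R R) (i + 1)) y 0]
  simp

theorem ext_left (h : IsShortExact R f g) (i : ℕ) (hB : ExtVanish R B R (i + 1))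
    (hC : ExtVanish R C R (i + 2)) : ExtVanish R A R (i + 1) := by
  rw [extVanish_iff] at *
  refine subsingleton_of_forall_eq 0 fun x => ?_
  obtain ⟨y, rfl⟩ := Abelian.Ext.contravariant_sequence_exact₁ (sesComplex_exact h) _ x
    (n₁ := i + 2) (by omega)
    (Subsingleton.elim (α := Abelian.Ext (ModuleCat.of R C) (ModuleCat.of R R) (i + 2)) _ _)
  rw [Subsingleton.elim (α := Abelian.Ext (ModuleCat.of R B) (ModuleCat.of R R) (i + 1)) y 0]
  simp

theorem ext_right (h : IsShortExact R f g) (i : ℕ) (hA : ExtVanish R A R (i + 1))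
    (hB : ExtVanish R B R (i + 2)) : ExtVanish R C R (i + 2) := by
  rw [extVanish_iff] at *
  refine subsingleton_of_forall_eq 0 fun x => ?_
  obtain ⟨y, rfl⟩ := Abelian.Ext.contravariant_sequence_exact₃ (sesComplex_exact h) _ x
    (Subsingleton.elim (α := Abelian.Ext (ModuleCat.of R B) (ModuleCat.of R R) (i + 2)) _ _)
    (n₀ := i + 1) (by omega)
  rw [Subsingleton.elim (α := Abelian.Ext (ModuleCat.of R A) (ModuleCat.of R R) (i + 1)) y 0]
  simp

theorem dual_surj (h : IsShortExact R f g) (hC : ExtVanish R C R 1) :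
    Function.Surjective f.dualMap := by
  intro φ
  rw [extVanish_iff] at hC
  obtain ⟨y, hy⟩ := Abelian.Ext.contravariant_sequence_exact₁ (sesComplex_exact h)
    (ModuleCat.of R R) (Abelian.Ext.mk₀ (ModuleCat.ofHom φ))
    (n₁ := 1) (by omega)
    (Subsingleton.elim (α := Abelian.Ext (ModuleCat.of R C) (ModuleCat.of R R) 1) _ _)
  obtain ⟨y, rfl⟩ := Abelian.Ext.addEquiv₀.symm.surjective y
  change (Abelian.Ext.mk₀ _).comp (Abelian.Ext.mk₀ y) _ = _ at hy
  rw [Abelian.Ext.mk₀_comp_mk₀] at hy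
  have := Abelian.Ext.addEquiv₀.symm.injective hy
  refine ⟨y.hom, ?_⟩
  have h2 := congrArg ModuleCat.Hom.hom this
  exact h2

theorem ext_one_right (h : IsShortExact R f g) (hs : Function.Surjective f.dualMap)
    (hB : ExtVanish R B R 1) : ExtVanish R C R 1 := by
  rw [extVanish_iff] at *
  refine subsingleton_of_forall_eq 0 fun x => ?_
  obtain ⟨y, rfl⟩ := Abelian.Ext.contravariant_sequence_exact₃ (sesComplex_exact h) _ x
    (Subsingleton.elim (α := Abelian.Ext (ModuleCat.of R B) (ModuleCat.of R R) 1) _ _)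
    (n₀ := 0) (by omega)
  obtain ⟨y, rfl⟩ := Abelian.Ext.addEquiv₀.symm.surjective y
  change (sesComplex_exact h).extClass.comp (Abelian.Ext.mk₀ y) _ = 0
  obtain ⟨z, hz⟩ := hs y.hom
  have : y = (sesComplex h).f ≫ (ModuleCat.ofHom z : (sesComplex h).X₂ ⟶ ModuleCat.of R R) := by
    ext t
    exact (LinearMap.congr_fun hz t).symm
  rw [this, ← Abelian.Ext.mk₀_comp_mk₀, 
    ← Abelian.Ext.comp_assoc (a₁₂ := 1) _ _ _ (by omega) (by omega) (by omega),
    (sesComplex_exact h).extClass_comp, Abelian.Ext.zero_comp]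

theorem ses_dual (h : IsShortExact R f g) (hs : Function.Surjective f.dualMap) :
    IsShortExact R g.dualMap f.dualMap := by
  refine ⟨LinearMap.dualMap_injective_of_surjective h.2.1, hs, ?_⟩
  exact LinearMap.exact_lcomp_of_exact_of_surjective (N := R) h.2.2 h.2.1

theorem ext_proj [Module.Projective R A] (i : ℕ) : ExtVanish R A R (i + 1) := by
  rw [extVanish_iff]
  have : Projective (ModuleCat.of R A) := (ModuleCat.of R A).projective_of_categoryTheory_projective
  exact subsingleton_of_forall_eq 0 fun x => Abelian.Ext.eq_zero_of_projective x

theorem tr_free [Module.Finite R A] [Module.Free R A] : IsTotallyReflexive R A := by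
  refine ⟨inferInstance, Module.bijective_dual_eval R A, ?_, ?_⟩
  · rintro (_ | i) hi
    · omega
    · exact ext_proj i
  · rintro (_ | i) hi
    · omega
    · exact ext_proj i

theorem tr_ext [IsNoetherianRing R] (h : IsShortExact R f g) (hA : IsTotallyReflexive R A)
    (hC : IsTotallyReflexive R C) : IsTotallyReflexive R B := by
  have hd := ses_dual h (dual_surj h (hC.2.2.1 1 le_rfl))
  have hdd := ses_dual hd (dual_surj hd (hA.2.2.2 1 le_rfl))
  refine ⟨?_, ?_, ?_, ?_⟩
  · have := hA.1
    have := hC.1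
    exact Module.Finite.of_exact h.2.2 h.2.1
  · constructor
    · rw [injective_iff_map_eq_zero]
      intro b hb
      have h1 : g b = 0 := by
        apply hC.2.1.1
        rw [map_zero]
        have := congrArg g.dualMap.dualMap hb
        rw [map_zero] at this
        exact this
      obtain ⟨a, rfl⟩ := ses_lift h b h1
      have h2 : a = 0 := by
        apply hA.2.1.1
        apply hdd.1
        rw [map_zero, map_zero]
        exact hb
      rw [h2, map_zero]
    · intro φ
      obtain ⟨c, hc⟩ := hC.2.1.2 (g.dualMap.dualMap φ)
      obtain ⟨b, rfl⟩ := h.2.1 c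
      have h1 : g.dualMap.dualMap (φ - Module.Dual.eval R B b) = 0 := by
        rw [map_sub, ← hc]
        exact sub_self _
      obtain ⟨ψ, hψ⟩ := ses_lift hdd _ h1
      obtain ⟨a, rfl⟩ := hA.2.1.2 ψ
      refine ⟨b + f a, ?_⟩
      have h2 : Module.Dual.eval R B (f a) = φ - Module.Dual.eval R B b := hψ
      rw [map_add, h2]
      abel
  · rintro (_ | i) hi
    · omega
    · exact ext_mid h i (hA.2.2.1 _ hi) (hC.2.2.1 _ hi)
  · rintro (_ | i) hi
    · omega
    · exact ext_mid hd i (hC.2.2.2 _ hi) (hA.2.2.2 _ hi)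

theorem tr_ker [IsNoetherianRing R] (h : IsShortExact R f g) (hB : IsTotallyReflexive R B)
    (hC : IsTotallyReflexive R C) : IsTotallyReflexive R A := by
  have hd := ses_dual h (dual_surj h (hC.2.2.1 1 le_rfl))
  have hs : Function.Surjective g.dualMap.dualMap := by
    intro φ
    obtain ⟨c, rfl⟩ := hC.2.1.2 φ
    obtain ⟨b, rfl⟩ := h.2.1 c
    exact ⟨Module.Dual.eval R B b, rfl⟩
  have hdd := ses_dual hd hs
  refine ⟨?_, ⟨?_, ?_⟩, ?_, ?_⟩
  · have := hB.1
    exact Module.Finite.of_injective f h.1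
  · intro x y hxy
    apply h.1
    apply hB.2.1.1
    exact congrArg f.dualMap.dualMap hxy
  · intro φ
    obtain ⟨b, hb⟩ := hB.2.1.2 (f.dualMap.dualMap φ)
    have : g b = 0 := by
      apply hC.2.1.1
      rw [map_zero]
      have := ses_zero hdd φ
      rw [← hb] at this
      exact this
    obtain ⟨a, rfl⟩ := ses_lift h b this
    exact ⟨a, hdd.1 hb⟩
  · rintro (_ | i) hi
    · omega
    · exact ext_left h i (hB.2.2.1 _ hi) (hC.2.2.1 _ (by omega))
  · rintro (_ | _ | i) hi
    · omega
    · exact ext_one_right hd hs (hB.2.2.2 1 le_rfl)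
    · exact ext_right hd i (hC.2.2.2 _ (by omega)) (hB.2.2.2 _ (by omega))

end ses


section constr
variable {R}
variable {A B C : Type u} [AddCommGroup A] [Module R A] [AddCommGroup B] [Module R B]
    [AddCommGroup C] [Module R C] {f : A →ₗ[R] B} {g : B →ₗ[R] C}
variable {A' B' C' : Type u} [AddCommGroup A'] [Module R A'] [AddCommGroup B'] [Module R B']
    [AddCommGroup C'] [Module R C']

theorem ses_ker (hg : Function.Surjective g) : IsShortExact R (LinearMap.ker g).subtype g :=
  ⟨Subtype.val_injective, hg, fun y => by simp⟩

theorem ses_congr (h : IsShortExact R f g) (e : A' ≃ₗ[R] A) (e' : C ≃ₗ[R] C') :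
    IsShortExact R (f ∘ₗ e.toLinearMap) (e'.toLinearMap ∘ₗ g) := by
  refine ⟨h.1.comp e.injective, e'.surjective.comp h.2.1, fun y => ?_⟩
  constructor
  · intro hy
    obtain ⟨x, rfl⟩ := ses_lift h y (by simpa using hy)
    exact ⟨e.symm x, by simp⟩
  · rintro ⟨x, rfl⟩
    simp [ses_zero h]

theorem ses_congr_mid (h : IsShortExact R f g) (e : B ≃ₗ[R] B') :
    IsShortExact R (e.toLinearMap ∘ₗ f) (g ∘ₗ e.symm.toLinearMap) := by
  refine ⟨e.injective.comp h.1, h.2.1.comp e.symm.surjective, fun y => ?_⟩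
  constructor
  · intro hy
    obtain ⟨x, hx⟩ := ses_lift h (e.symm y) hy
    exact ⟨x, by simp [hx]⟩
  · rintro ⟨x, rfl⟩
    simp [ses_zero h]

theorem ses_pi (h : IsShortExact R f g) (a : ℕ) :
    IsShortExact R (f.compLeft (Fin a)) (g.compLeft (Fin a)) := by
  refine ⟨fun x y hxy => ?_, fun y => ?_, fun y => ?_⟩
  · funext i
    exact h.1 (congrFun hxy i)
  · choose s hs using h.2.1
    exact ⟨fun i => s (y i), funext fun i => hs _⟩
  · constructor
    · intro hy
      have : ∀ i, ∃ x, f x = y i := fun i => ses_lift h _ (congrFun hy i)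
      choose s hs using this
      exact ⟨s, funext hs⟩
    · rintro ⟨x, rfl⟩
      funext i
      exact ses_zero h (x i)

theorem ses_prod : IsShortExact R (LinearMap.inl R A B) (LinearMap.snd R A B) := by
  refine ⟨LinearMap.inl_injective, LinearMap.snd_surjective, ?_⟩
  rintro ⟨x, y⟩
  constructor
  · intro h
    exact ⟨x, by simpa using Eq.symm h⟩
  · rintro ⟨z, hz⟩
    simpa using (congrArg Prod.snd hz).symm

/-- swapping the kernel along a projective cover -/
theorem ses_swap {S F : Type u} [AddCommGroup S] [Module R S] [AddCommGroup F] [Module R F]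
    [Module.Projective R F] (h : IsShortExact R f g) {i : S →ₗ[R] F} {p : F →ₗ[R] C}
    (hp : IsShortExact R i p) :
    ∃ (j : S →ₗ[R] A × F) (q : A × F →ₗ[R] B), IsShortExact R j q := by
  obtain ⟨σ, hσ⟩ := Module.projective_lifting_property g p h.2.1
  have hσ' : ∀ y, g (σ y) = p y := fun y => LinearMap.congr_fun hσ y
  let q : A × F →ₗ[R] B := f.coprod σ
  have hq : Function.Surjective q := by
    intro x
    obtain ⟨y, hy⟩ := hp.2.1 (g x)
    obtain ⟨a, ha⟩ := ses_lift h (x - σ y) (by rw [map_sub, hσ', hy, sub_self])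
    exact ⟨(a, y), by simp [q, ha]⟩
  -- the map from the kernel to the syzygy
  let φ : LinearMap.ker q →ₗ[R] LinearMap.ker p :=
    ((LinearMap.snd R A F) ∘ₗ (LinearMap.ker q).subtype).codRestrict _ (by
      rintro ⟨⟨a, y⟩, hx⟩
      have h0 : f a + σ y = 0 := by simpa [q] using hx
      have := congrArg g h0
      rw [map_add, ses_zero h, hσ', zero_add, map_zero] at this
      simpa using this)
  have hφ : Function.Bijective φ := by
    constructor
    · rw [injective_iff_map_eq_zero]
      rintro ⟨⟨a, y⟩, hx⟩ h0
      have hy : y = 0 := congrArg Subtype.val h0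
      subst hy
      have h1 : f a = 0 := by simpa [q] using hx
      have h2 : a = 0 := h.1 (by rw [h1, map_zero])
      subst h2
      rfl
    · rintro ⟨y, hy⟩
      have hy' : p y = 0 := hy
      obtain ⟨a, ha⟩ := ses_lift h (- σ y) (by rw [map_neg, hσ', hy', neg_zero])
      exact ⟨⟨(a, y), by simp [q, ha]⟩, rfl⟩
  let ψ : S →ₗ[R] LinearMap.ker p := i.codRestrict _ (fun s => ses_zero hp s)
  have hψ : Function.Bijective ψ := by
    constructor
    · intro x y hxy
      exact hp.1 (congrArg Subtype.val hxy)
    · rintro ⟨y, hy⟩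
      obtain ⟨s, rfl⟩ := ses_lift hp y hy
      exact ⟨s, rfl⟩
  let e : S ≃ₗ[R] LinearMap.ker q :=
    (LinearEquiv.ofBijective ψ hψ).trans (LinearEquiv.ofBijective φ hφ).symm
  exact ⟨_, _, ses_congr (ses_ker hq) e (LinearEquiv.refl R B)⟩

/-- horseshoe lemma -/
theorem ses_horseshoe {SA FA SC FC : Type u} [AddCommGroup SA] [Module R SA]
    [AddCommGroup FA] [Module R FA] [AddCommGroup SC] [Module R SC]
    [AddCommGroup FC] [Module R FC]
    [Module.Projective R FC] (h : IsShortExact R f g) {i : SA →ₗ[R] FA} {p : FA →ₗ[R] A}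
    (hp : IsShortExact R i p) {i' : SC →ₗ[R] FC} {p' : FC →ₗ[R] C}
    (hp' : IsShortExact R i' p') :
    ∃ (SB : ModuleCat.{u} R) (j : SB →ₗ[R] FA × FC) (q : FA × FC →ₗ[R] B)
      (f' : SA →ₗ[R] SB) (g' : SB →ₗ[R] SC), IsShortExact R j q ∧ IsShortExact R f' g' := by
  obtain ⟨σ, hσ⟩ := Module.projective_lifting_property g p' h.2.1
  have hσ' : ∀ y, g (σ y) = p' y := fun y => LinearMap.congr_fun hσ y
  let q : FA × FC →ₗ[R] B := (f ∘ₗ p).coprod σ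
  have hq : Function.Surjective q := by
    intro x
    obtain ⟨y, hy⟩ := hp'.2.1 (g x)
    obtain ⟨a, ha⟩ := ses_lift h (x - σ y) (by rw [map_sub, hσ', hy, sub_self])
    obtain ⟨a, rfl⟩ := hp.2.1 a
    exact ⟨(a, y), by simp [q, ha]⟩
  let f' : SA →ₗ[R] LinearMap.ker q :=
    ((LinearMap.inl R FA FC) ∘ₗ i).codRestrict _ (by
      intro s
      simp [q, ses_zero hp])
  have hk : ∀ x : LinearMap.ker q, p' x.1.2 = 0 := by
    rintro ⟨⟨a, y⟩, hx⟩
    have h0 : f (p a) + σ y = 0 := by simpa [q] using hx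
    have := congrArg g h0
    rw [map_add, ses_zero h, hσ', zero_add, map_zero] at this
    simpa using this
  let g'' : LinearMap.ker q →ₗ[R] LinearMap.range i' :=
    ((LinearMap.snd R FA FC) ∘ₗ (LinearMap.ker q).subtype).codRestrict _ (by
      intro x
      exact ses_lift hp' _ (hk x))
  let e := LinearEquiv.ofInjective i' hp'.1
  have hg : IsShortExact R f' g'' := by
    refine ⟨?_, ?_, ?_⟩
    · intro x y hxy
      exact hp.1 (congrArg (fun z => z.1.1) hxy)
    · rintro ⟨_, ⟨s, rfl⟩⟩
      obtain ⟨a, ha⟩ := ses_lift h (- σ (i' s)) (by rw [map_neg, hσ', ses_zero hp', neg_zero])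
      obtain ⟨a, rfl⟩ := hp.2.1 a
      exact ⟨⟨(a, i' s), by simp [q, ha]⟩, rfl⟩
    · rintro ⟨⟨a, y⟩, hx⟩
      constructor
      · intro h0
        have hy : y = 0 := congrArg Subtype.val h0
        subst hy
        have h1 : f (p a) = 0 := by simpa [q] using hx
        have h2 : p a = 0 := h.1 (by rw [h1, map_zero])
        obtain ⟨s, rfl⟩ := ses_lift hp a h2
        exact ⟨s, rfl⟩
      · rintro ⟨s, hs⟩
        have : (0 : FC) = y := congrArg (fun z => z.1.2) hs
        subst this
        rfl
  exact ⟨ModuleCat.of R (LinearMap.ker q), _, q, _, _, ses_ker hq,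
    ses_congr hg (LinearEquiv.refl R SA) e.symm⟩

/-- Pushout of two short exact sequences with the same left term. -/
theorem ses_pushout {U : Type u} [AddCommGroup U] [Module R U] {i : U →ₗ[R] A} {p : A →ₗ[R] C}
    (h : IsShortExact R i p) {j : U →ₗ[R] A'} {q : A' →ₗ[R] C'} (h' : IsShortExact R j q) :
    ∃ (P : ModuleCat.{u} R) (s : A →ₗ[R] P) (t : P →ₗ[R] C') (s' : A' →ₗ[R] P) (t' : P →ₗ[R] C),
      IsShortExact R s t ∧ IsShortExact R s' t' := by
  let N : Submodule R (A × A') := LinearMap.range (i.prod (-j))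
  let s : A →ₗ[R] (A × A') ⧸ N := N.mkQ ∘ₗ LinearMap.inl R A A'
  let s' : A' →ₗ[R] (A × A') ⧸ N := N.mkQ ∘ₗ LinearMap.inr R A A'
  let t : (A × A') ⧸ N →ₗ[R] C' := N.liftQ (q ∘ₗ LinearMap.snd R A A') (by
    rintro _ ⟨x, rfl⟩
    simp [ses_zero h'])
  let t' : (A × A') ⧸ N →ₗ[R] C := N.liftQ (p ∘ₗ LinearMap.fst R A A') (by
    rintro _ ⟨x, rfl⟩
    simp [ses_zero h])
  refine ⟨ModuleCat.of R ((A × A') ⧸ N), s, t, s', t', ⟨?_, ?_, ?_⟩, ⟨?_, ?_, ?_⟩⟩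
  · rw [injective_iff_map_eq_zero]
    intro x hx
    obtain ⟨y, hy⟩ := (Submodule.Quotient.mk_eq_zero N).1 hx
    have h1 : i y = x := congrArg Prod.fst hy
    have h2 : - j y = 0 := congrArg Prod.snd hy
    have h3 : y = 0 := h'.1 (by rw [map_zero]; exact neg_eq_zero.1 h2)
    rw [← h1, h3, map_zero]
  · intro c
    obtain ⟨x, rfl⟩ := h'.2.1 c
    exact ⟨s' x, rfl⟩
  · intro y
    obtain ⟨⟨x, x'⟩, rfl⟩ := N.mkQ_surjective y
    constructor
    · intro h0
      have h0' : q x' = 0 := h0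
      obtain ⟨z, rfl⟩ := ses_lift h' x' h0'
      refine ⟨x + i z, ?_⟩
      refine (Submodule.Quotient.eq N).2 ⟨z, ?_⟩
      simp
    · rintro ⟨z, hz⟩
      rw [← hz]
      exact map_zero q
  · rw [injective_iff_map_eq_zero]
    intro x hx
    obtain ⟨y, hy⟩ := (Submodule.Quotient.mk_eq_zero N).1 hx
    have h1 : i y = 0 := congrArg Prod.fst hy
    have h2 : - j y = x := congrArg Prod.snd hy
    have h3 : y = 0 := h.1 (by rw [map_zero]; exact h1)
    rw [← h2, h3, map_zero, neg_zero]
  · intro c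
    obtain ⟨x, rfl⟩ := h.2.1 c
    exact ⟨s x, rfl⟩
  · intro y
    obtain ⟨⟨x, x'⟩, rfl⟩ := N.mkQ_surjective y
    constructor
    · intro h0
      have h0' : p x = 0 := h0
      obtain ⟨z, rfl⟩ := ses_lift h x h0'
      refine ⟨x' + j z, ?_⟩
      refine (Submodule.Quotient.eq N).2 ⟨-z, ?_⟩
      simp
    · rintro ⟨z, hz⟩
      rw [← hz]
      exact map_zero p

/-- dividing out a summand of the left term -/
theorem ses_quot {F : Type u} [AddCommGroup F] [Module R F] {i : A × F →ₗ[R] B}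
    (h : IsShortExact R i g) :
    ∃ (Y : ModuleCat.{u} R) (s : F →ₗ[R] B) (t : B →ₗ[R] Y) (s' : A →ₗ[R] Y) (t' : Y →ₗ[R] C),
      IsShortExact R s t ∧ IsShortExact R s' t' := by
  let s : F →ₗ[R] B := i ∘ₗ LinearMap.inr R A F
  let N : Submodule R B := LinearMap.range s
  let s' : A →ₗ[R] B ⧸ N := N.mkQ ∘ₗ i ∘ₗ LinearMap.inl R A F
  let t' : B ⧸ N →ₗ[R] C := N.liftQ g (by
    rintro _ ⟨x, rfl⟩
    exact ses_zero h _)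
  refine ⟨ModuleCat.of R (B ⧸ N), s, N.mkQ, s', t', ⟨?_, ?_, ?_⟩, ⟨?_, ?_, ?_⟩⟩
  · exact h.1.comp LinearMap.inr_injective
  · exact N.mkQ_surjective
  · intro y
    exact Submodule.Quotient.mk_eq_zero N
  · rw [injective_iff_map_eq_zero]
    intro x hx
    obtain ⟨y, hy⟩ := (Submodule.Quotient.mk_eq_zero N).1 hx
    have h1 := h.1 hy
    exact (congrArg Prod.fst h1).symm
  · intro c
    obtain ⟨x, rfl⟩ := h.2.1 c
    exact ⟨N.mkQ x, rfl⟩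
  · intro y
    obtain ⟨x, rfl⟩ := N.mkQ_surjective y
    constructor
    · intro h0
      obtain ⟨⟨a, y⟩, rfl⟩ := ses_lift h x h0
      refine ⟨a, ?_⟩
      refine (Submodule.Quotient.eq N).2 ⟨-y, ?_⟩
      change i _ = i _ - i _
      rw [← map_sub]
      simp
    · rintro ⟨z, hz⟩
      rw [← hz]
      exact ses_zero h _

end constr


set_option linter.unusedSectionVars false

section gd
variable {R} [IsNoetherianRing R]
variable {A B C : Type u} [AddCommGroup A] [Module R A] [AddCommGroup B] [Module R B]
    [AddCommGroup C] [Module R C] {f : A →ₗ[R] B} {g : B →ₗ[R] C}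
variable {F : Type u} [AddCommGroup F] [Module R F]

theorem tr_iso (e : A ≃ₗ[R] B) (h : IsTotallyReflexive R A) : IsTotallyReflexive R B := by
  have hs : IsShortExact R (0 : PUnit.{u+1} →ₗ[R] B) e.symm.toLinearMap := by
    refine ⟨fun _ _ _ => rfl, e.symm.surjective, fun y => ?_⟩
    constructor
    · intro hy
      exact ⟨0, (e.symm.map_eq_zero_iff.1 hy).symm⟩
    · rintro ⟨x, rfl⟩
      simp
  exact tr_ext hs tr_free h

theorem gd_iso {n : ℕ} (e : A ≃ₗ[R] B) (h : GdimLE R n (ModuleCat.of R A)) :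
    GdimLE R n (ModuleCat.of R B) := by
  cases n with
  | zero => exact tr_iso e h
  | succ n =>
    obtain ⟨X, K, f, g, hX, hs, hK⟩ := h
    exact ⟨X, K, _, _, hX, ses_congr hs (LinearEquiv.refl R K) e, hK⟩

theorem gd_finite {n : ℕ} {M : ModuleCat.{u} R} (h : GdimLE R n M) : Module.Finite R M := by
  cases n with
  | zero => exact h.1
  | succ n =>
    obtain ⟨X, K, f, g, hX, hs, hK⟩ := h
    have := hX.1
    exact Module.Finite.of_surjective g hs.2.1

theorem gd_succ {n : ℕ} : ∀ {M : ModuleCat.{u} R}, GdimLE R n M → GdimLE R (n + 1) M := by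
  induction n with
  | zero =>
    intro M h
    refine ⟨M, ModuleCat.of R PUnit.{u+1}, 0, LinearMap.id, h, ⟨fun _ _ _ => rfl,
      Function.surjective_id, fun y => ?_⟩, tr_free (A := PUnit.{u+1})⟩
    constructor
    · intro hy
      exact ⟨0, by simpa using Eq.symm hy⟩
    · rintro ⟨x, rfl⟩
      simp
  | succ n ih =>
    rintro M ⟨X, K, f, g, hX, hs, hK⟩
    exact ⟨X, K, f, g, hX, hs, ih hK⟩

theorem gd_mono {n m : ℕ} (hnm : n ≤ m) {M : ModuleCat.{u} R} (h : GdimLE R n M) :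
    GdimLE R m M := by
  induction hnm with
  | refl => exact h
  | step _ ih => exact gd_succ ih

theorem gd_ker_tr {n : ℕ} (h : IsShortExact R f g) (hC : IsTotallyReflexive R C)
    (hB : GdimLE R n (ModuleCat.of R B)) : GdimLE R n (ModuleCat.of R A) := by
  cases n with
  | zero => exact tr_ker h hB hC
  | succ n =>
    obtain ⟨X, K, k, p, hX, hs, hK⟩ := hB
    have hp0 : ∀ z, p (k z) = 0 := ses_zero hs
    have hsurj : Function.Surjective (g ∘ₗ p) := h.2.1.comp hs.2.1
    have hL : IsTotallyReflexive R (LinearMap.ker (g ∘ₗ p)) := tr_ker (ses_ker hsurj) hX hC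
    let k' : K →ₗ[R] LinearMap.ker (g ∘ₗ p) := k.codRestrict _ (fun z => by
      change g (p (k z)) = 0
      rw [hp0]
      exact map_zero g)
    let p' : LinearMap.ker (g ∘ₗ p) →ₗ[R] LinearMap.range f :=
      (p ∘ₗ (LinearMap.ker (g ∘ₗ p)).subtype).codRestrict _ (fun z => ses_lift h _ z.2)
    have hs' : IsShortExact R k' p' := by
      refine ⟨fun x y hxy => hs.1 (congrArg Subtype.val hxy), ?_, ?_⟩
      · rintro ⟨_, ⟨a, rfl⟩⟩
        obtain ⟨x, hx⟩ := hs.2.1 (f a)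
        refine ⟨⟨x, ?_⟩, Subtype.ext hx⟩
        change g (p x) = 0
        rw [hx]
        exact ses_zero h a
      · rintro ⟨x, hx⟩
        constructor
        · intro h0
          obtain ⟨z, hz⟩ := ses_lift hs x (congrArg Subtype.val h0)
          exact ⟨z, Subtype.ext hz⟩
        · rintro ⟨z, hz⟩
          rw [← hz]
          exact Subtype.ext (hp0 z)
    exact ⟨ModuleCat.of R (LinearMap.ker (g ∘ₗ p)), K, _, _, hL,
      ses_congr hs' (LinearEquiv.refl R K) (LinearEquiv.ofInjective f h.1).symm, hK⟩

theorem gd_prod_free [Module.Finite R F] [Module.Free R F] {n : ℕ}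
    (hA : GdimLE R n (ModuleCat.of R A)) : GdimLE R n (ModuleCat.of R (A × F)) := by
  cases n with
  | zero => exact tr_ext (ses_prod (A := A) (B := F)) hA tr_free
  | succ n =>
    obtain ⟨X, K, k, p, hX, hs, hK⟩ := hA
    refine ⟨ModuleCat.of R (X × F), K, LinearMap.inl R X F ∘ₗ k, p.prodMap LinearMap.id,
      tr_ext (ses_prod (A := X) (B := F)) hX tr_free, ⟨?_, ?_, ?_⟩, hK⟩
    · exact LinearMap.inl_injective.comp hs.1
    · rintro ⟨x, y⟩
      obtain ⟨x, rfl⟩ := hs.2.1 x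
      exact ⟨(x, y), rfl⟩
    · rintro ⟨x, y⟩
      constructor
      · intro h0
        have h1 : p x = 0 := congrArg Prod.fst h0
        have h2 : y = 0 := congrArg Prod.snd h0
        obtain ⟨z, rfl⟩ := ses_lift hs x h1
        subst h2
        exact ⟨z, rfl⟩
      · rintro ⟨z, hz⟩
        rw [← hz]
        exact Prod.ext (ses_zero hs z) rfl

theorem gd_syz [Module.Finite R F] [Module.Free R F] {n : ℕ} {i : A →ₗ[R] F} {p : F →ₗ[R] B}
    (h : IsShortExact R i p) (hB : GdimLE R n (ModuleCat.of R B)) :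
    GdimLE R (n - 1) (ModuleCat.of R A) := by
  cases n with
  | zero => exact tr_ker h tr_free hB
  | succ n =>
    obtain ⟨X, K, k, q, hX, hs, hK⟩ := hB
    obtain ⟨j, r, hjr⟩ := ses_swap hs h
    exact gd_ker_tr hjr hX (gd_prod_free hK)

theorem gd_ext {n : ℕ} : ∀ {A B C : Type u} [AddCommGroup A] [Module R A] [AddCommGroup B]
    [Module R B] [AddCommGroup C] [Module R C] {f : A →ₗ[R] B} {g : B →ₗ[R] C},
    IsShortExact R f g → GdimLE R n (ModuleCat.of R A) → GdimLE R n (ModuleCat.of R C) →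
    GdimLE R n (ModuleCat.of R B) := by
  induction n with
  | zero =>
    intro A B C _ _ _ _ _ _ f g h hA hC
    exact tr_ext h hA hC
  | succ n ih =>
    intro A B C _ _ _ _ _ _ f g h hA hC
    have : Module.Finite R A := gd_finite hA
    have : Module.Finite R C := gd_finite hC
    obtain ⟨a, p, hp⟩ := Module.Finite.exists_fin' R A
    obtain ⟨c, q, hq⟩ := Module.Finite.exists_fin' R C
    obtain ⟨SB, j, r, f', g', h1, h2⟩ := ses_horseshoe h (ses_ker hp) (ses_ker hq)
    exact ⟨ModuleCat.of R ((Fin a → R) × (Fin c → R)), SB, j, r, tr_free, h1,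
      ih (B := SB) h2 (gd_syz (ses_ker hp) hA) (gd_syz (ses_ker hq) hC)⟩

theorem gd_coker [Module.Finite R F] [Module.Free R F] {n : ℕ} {i : F →ₗ[R] A} {p : A →ₗ[R] B}
    (h : IsShortExact R i p) (hA : GdimLE R n (ModuleCat.of R A)) :
    GdimLE R (n + 1) (ModuleCat.of R B) := by
  cases n with
  | zero => exact ⟨ModuleCat.of R A, ModuleCat.of R F, i, p, hA, h, tr_free (A := F)⟩
  | succ n =>
    apply gd_succ
    obtain ⟨X, K, k, q, hX, hs, hK⟩ := hA
    obtain ⟨σ, hσ⟩ := Module.projective_lifting_property q i hs.2.1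
    have hσ' : ∀ y, q (σ y) = i y := fun y => LinearMap.congr_fun hσ y
    have hk0 : ∀ z, q (k z) = 0 := ses_zero hs
    refine ⟨X, ModuleCat.of R (K × F), k.coprod σ, p ∘ₗ q, hX, ⟨?_, ?_, ?_⟩, gd_prod_free hK⟩
    · rw [injective_iff_map_eq_zero]
      rintro ⟨z, y⟩ h0
      have h0' : k z + σ y = 0 := by simpa using h0
      have h1 := congrArg q h0'
      rw [map_add, hk0, hσ', zero_add, map_zero] at h1
      have h2 : y = 0 := h.1 (by rw [map_zero]; exact h1)
      subst h2
      rw [map_zero, add_zero] at h0'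
      have h3 : z = 0 := hs.1 (by rw [map_zero]; exact h0')
      subst h3
      rfl
    · exact h.2.1.comp hs.2.1
    · intro x
      constructor
      · intro h0
        obtain ⟨y, hy⟩ := ses_lift h (q x) h0
        obtain ⟨z, hz⟩ := ses_lift hs (x - σ y) (by
          rw [map_sub, hσ', hy]
          exact sub_self _)
        exact ⟨(z, y), by simp [hz]⟩
      · rintro ⟨⟨z, y⟩, rfl⟩
        change p (q (k.coprod σ (z, y))) = 0
        rw [LinearMap.coprod_apply, map_add, hk0, hσ', zero_add]
        exact ses_zero h y

/-- finite Gorenstein dimension -/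
def FinG (R : Type u) [CommRing R] (M : ModuleCat.{u} R) : Prop := ∃ m : ℕ, GdimLE R m M

theorem fg_ext (h : IsShortExact R f g) (hA : FinG R (ModuleCat.of R A))
    (hC : FinG R (ModuleCat.of R C)) : FinG R (ModuleCat.of R B) := by
  obtain ⟨n, hn⟩ := hA
  obtain ⟨m, hm⟩ := hC
  exact ⟨max n m, gd_ext h (gd_mono (le_max_left _ _) hn) (gd_mono (le_max_right _ _) hm)⟩

theorem fg_pi (hA : FinG R (ModuleCat.of R A)) (a : ℕ) :
    FinG R (ModuleCat.of R (Fin a → A)) := by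
  induction a with
  | zero => exact ⟨0, tr_iso (LinearEquiv.ofSubsingleton PUnit.{u+1} (Fin 0 → A)) tr_free⟩
  | succ a ih =>
    obtain ⟨m, hm⟩ := fg_ext (ses_prod (A := A) (B := Fin a → A)) hA ih
    exact ⟨m, gd_iso (Fin.consLinearEquiv R (fun _ : Fin (a + 1) => A)) hm⟩

theorem syz_congr {m : ℕ} {V : ModuleCat.{u} R} (e : A ≃ₗ[R] B)
    (h : IsSyzygy R m V (ModuleCat.of R A)) : IsSyzygy R m V (ModuleCat.of R B) := by
  cases m with
  | zero =>
    obtain ⟨e'⟩ := h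
    exact ⟨e'.trans e⟩
  | succ m =>
    obtain ⟨W, F, f, g, hF, hF', hs, hW⟩ := h
    exact ⟨W, F, _, _, hF, hF', ses_congr hs (LinearEquiv.refl R W) e, hW⟩

theorem syz_comp {n m : ℕ} {V W : ModuleCat.{u} R} (hV : IsSyzygy R m V W) :
    ∀ {M : ModuleCat.{u} R}, IsSyzygy R n W M → IsSyzygy R (n + m) V M := by
  induction n with
  | zero =>
    rintro M ⟨e⟩
    rw [zero_add]
    exact syz_congr (A := W) (B := M) e hV
  | succ n ih =>
    rintro M ⟨W', F, f, g, hF, hF', hs, hW⟩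
    rw [add_right_comm]
    exact ⟨W', F, f, g, hF, hF', hs, ih hW⟩

theorem syz_pi (a : ℕ) {m : ℕ} {V : ModuleCat.{u} R} : ∀ {M : ModuleCat.{u} R},
    IsSyzygy R m V M → IsSyzygy R m (ModuleCat.of R (Fin a → V)) (ModuleCat.of R (Fin a → M)) := by
  induction m with
  | zero =>
    rintro M ⟨e⟩
    exact ⟨LinearEquiv.piCongrRight fun _ => e⟩
  | succ m ih =>
    rintro M ⟨W', F, f, g, hF, hF', hs, hW⟩
    exact ⟨ModuleCat.of R (Fin a → W'), ModuleCat.of R (Fin a → F), _, _,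
      inferInstanceAs (Module.Free R (Fin a → F)), inferInstanceAs (Module.Finite R (Fin a → F)),
      ses_pi hs a, ih hW⟩

theorem syz_finite {m : ℕ} {V : ModuleCat.{u} R} : ∀ {M : ModuleCat.{u} R},
    IsSyzygy R m V M → Module.Finite R M → Module.Finite R V := by
  induction m with
  | zero =>
    rintro M ⟨e⟩ hM
    exact Module.Finite.equiv e.symm
  | succ m ih =>
    rintro M ⟨W', F, f, g, hF, hF', hs, hW⟩ hM
    exact ih hW (Module.Finite.of_injective f hs.1)

theorem syz_exists (m : ℕ) : ∀ (M : ModuleCat.{u} R), Module.Finite R M →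
    ∃ V : ModuleCat.{u} R, IsSyzygy R m V M := by
  induction m with
  | zero =>
    intro M hM
    exact ⟨M, ⟨LinearEquiv.refl R M⟩⟩
  | succ m ih =>
    intro M hM
    obtain ⟨a, p, hp⟩ := Module.Finite.exists_fin' R M
    obtain ⟨V, hV⟩ := ih (ModuleCat.of R (LinearMap.ker p))
      (inferInstanceAs (Module.Finite R (LinearMap.ker p)))
    exact ⟨V, ModuleCat.of R (LinearMap.ker p), ModuleCat.of R (Fin a → R), _, p,
      inferInstanceAs (Module.Free R (Fin a → R)), inferInstanceAs (Module.Finite R (Fin a → R)),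
      ses_ker hp, hV⟩

/-- The iterated horseshoe lemma. -/
theorem syz_ses {m : ℕ} {V V' : ModuleCat.{u} R} : ∀ {A B C : ModuleCat.{u} R}
    {f : A →ₗ[R] B} {g : B →ₗ[R] C}, IsShortExact R f g → IsSyzygy R m V A → IsSyzygy R m V' C →
    FinG R B → ∃ (L : ModuleCat.{u} R) (i : V →ₗ[R] L) (p : L →ₗ[R] V'),
      IsShortExact R i p ∧ FinG R L := by
  induction m with
  | zero =>
    rintro A B C f g h ⟨e⟩ ⟨e'⟩ hB
    exact ⟨B, _, _, ses_congr h e e'.symm, hB⟩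
  | succ m ih =>
    rintro A B C f g h ⟨W, F, i, p, hF, hF', hs, hW⟩ ⟨W', F₁, i', p', hF₁, hF₁', hs', hW'⟩ ⟨n, hB⟩
    obtain ⟨SB, j, r, f', g', h1, h2⟩ := ses_horseshoe h hs hs'
    exact ih h2 hW hW' ⟨n - 1, gd_syz (A := SB) h1 hB⟩

/-- the equivalence of iterated powers -/
def powEquiv (R : Type u) [CommRing R] (a b : ℕ) (M : Type u) [AddCommGroup M] [Module R M] :
    (Fin a → Fin b → M) ≃ₗ[R] (Fin (a * b) → M) :=
  (LinearEquiv.curry R M (Fin a) (Fin b)).symm.trans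
    (LinearEquiv.funCongrLeft R M finProdFinEquiv.symm)

/-- exchanging the two indices -/
def swapEquiv (R : Type u) [CommRing R] (a b : ℕ) (M : Type u) [AddCommGroup M] [Module R M] :
    (Fin a → Fin b → M) ≃ₗ[R] (Fin b → Fin a → M) where
  toFun x i j := x j i
  invFun x i j := x j i
  map_add' _ _ := rfl
  map_smul' _ _ := rfl
  left_inv _ := rfl
  right_inv _ := rfl

/-- The property in the conclusion. -/
def Red (R : Type u) [CommRing R] (M : Type u) [AddCommGroup M] [Module R M]
    (a b r : ℕ) : Prop :=
  ∃ (Y W' : ModuleCat.{u} R)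
      (f' : (Fin a → M) →ₗ[R] Y) (g' : Y →ₗ[R] (Fin b → W')),
      Module.Finite R Y ∧ IsSyzygy R r W' (ModuleCat.of R M) ∧
      IsShortExact R f' g' ∧ ∃ m : ℕ, GdimLE R m Y

theorem red_step (M : Type u) [AddCommGroup M] [Module R M] [Module.Finite R M] (a b n : ℕ)
    (h : Red R M a b n) : Red R M (a * a) (b * b) (n + (n + 1)) := by
  obtain ⟨K, W, f, g, hfin, hW, hfg, hK⟩ := h
  have hWf : Module.Finite R W := syz_finite hW ‹_›
  obtain ⟨V', hV'⟩ := syz_exists (n + 1) W hWf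
  obtain ⟨c, p, hp⟩ := Module.Finite.exists_fin' R W
  let V : ModuleCat.{u} R := ModuleCat.of R (LinearMap.ker p)
  have hV : IsSyzygy R (n + 1) V (ModuleCat.of R M) := by
    refine syz_comp (W := W) ?_ hW
    exact ⟨V, ModuleCat.of R (Fin c → R), _, p, inferInstanceAs (Module.Free R (Fin c → R)),
      inferInstanceAs (Module.Finite R (Fin c → R)), ses_ker hp, ⟨LinearEquiv.refl R V⟩⟩
  obtain ⟨L, i, q, hiq, hL⟩ := syz_ses (A := ModuleCat.of R (Fin a → M)) (B := K)
    (C := ModuleCat.of R (Fin b → W)) hfg (syz_pi a hV) (syz_pi b hV') hK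
  obtain ⟨j, r, hjr⟩ := ses_swap (ses_pi hfg a) (ses_pi (ses_pi (ses_ker hp) b) a)
  have h2 := ses_congr (ses_pi hiq b) (swapEquiv R a b V) (powEquiv R b b V')
  obtain ⟨P, s, t, s', t', h3, h4⟩ := ses_pushout hjr h2
  have hP : FinG R P := fg_ext (B := P) h4 (fg_pi hL b) (fg_pi hK a)
  obtain ⟨Y, u, v, u', v', h5, h6⟩ := ses_quot h3
  obtain ⟨m, hm⟩ := hP
  have hY : GdimLE R (m + 1) Y := gd_coker (A := P) (B := Y) h5 hm
  exact ⟨Y, V', _, _, gd_finite hY, syz_comp hV' hW,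
    ses_congr h6 (powEquiv R a a M).symm (LinearEquiv.refl R _), m + 1, hY⟩

end gd

theorem stmt8 (R : Type u) [CommRing R] [IsNoetherianRing R] [IsLocalRing R]
    (M K : Type u) [AddCommGroup M] [Module R M] [Module.Finite R M]
    [AddCommGroup K] [Module R K] [Module.Finite R K]
    (a b n : ℕ) (ha : 1 ≤ a) (hb : 1 ≤ b)
    (W : ModuleCat.{u} R) (hW : IsSyzygy R n W (ModuleCat.of R M))
    (f : (Fin a → M) →ₗ[R] K) (g : K →ₗ[R] (Fin b → W))
    (hfg : IsShortExact R f g)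
    (hK : ∃ m : ℕ, GdimLE R m (ModuleCat.of R K)) :
    ∀ i : ℕ, 1 ≤ i → ∃ (Y W' : ModuleCat.{u} R)
      (f' : (Fin (a ^ 2 ^ i) → M) →ₗ[R] Y) (g' : Y →ₗ[R] (Fin (b ^ 2 ^ i) → W')),
      Module.Finite R Y ∧ IsSyzygy R (2 ^ i * (n + 1) - 1) W' (ModuleCat.of R M) ∧
      IsShortExact R f' g' ∧ ∃ m : ℕ, GdimLE R m Y := by
  intro i hi
  clear hi
  change Red R M (a ^ 2 ^ i) (b ^ 2 ^ i) (2 ^ i * (n + 1) - 1)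
  induction i with
  | zero =>
    have h1 : a ^ 2 ^ 0 = a := by simp
    have h2 : b ^ 2 ^ 0 = b := by simp
    have h3 : 2 ^ 0 * (n + 1) - 1 = n := by simp
    rw [h1, h2, h3]
    exact ⟨ModuleCat.of R K, W, f, g, inferInstanceAs (Module.Finite R K), hW, hfg, hK⟩
  | succ i ih =>
    have h1 : ∀ x : ℕ, x ^ 2 ^ (i + 1) = x ^ 2 ^ i * x ^ 2 ^ i := fun x => by
      rw [pow_succ, mul_two, pow_add]
    have h3 : 2 ^ (i + 1) * (n + 1) - 1 =
        (2 ^ i * (n + 1) - 1) + ((2 ^ i * (n + 1) - 1) + 1) := by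
      have : 1 ≤ 2 ^ i * (n + 1) := Nat.mul_pos (by positivity) (by omega)
      rw [pow_succ, mul_right_comm]
      omega
    rw [h1, h1, h3]
    refine red_step M _ _ _ ?_
    exact ih
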